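/- In a braided quantum group, the secondary braiding τ := (id²⊗ε)(id⊗σ⁻¹)(φ⊗id)σ is bijective, with inverse characterized by τ⁻¹σ = (id²⊗ε)(id⊗σ)(φ⊗id) = (ε⊗id²)(σ⊗id)(id⊗φ). -/

import Mathlib

open TensorProduct LinearMap

noncomputable section

variable (A : Type*) [Ring A] [Algebra ℂ A]

/-- Two-fold tensor product of `A` with itself. -/
abbrev T2 := A ⊗[ℂ] A
/-- Three-fold tensor product (right associated). -/
abbrev T3 := A ⊗[ℂ] (A ⊗[ℂ] A)
/-- Four-fold tensor product (right associated). -/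
abbrev T4 := A ⊗[ℂ] (A ⊗[ℂ] (A ⊗[ℂ] A))

variable {A}

/-- The multiplication of `A` as a linear map. -/
def mA : T2 A →ₗ[ℂ] A := LinearMap.mul' ℂ A

/-- `f ⊗ id` : a map of `T2` acting on the factors 1,2 of `T3`. -/
def op12 (f : T2 A →ₗ[ℂ] T2 A) : T3 A →ₗ[ℂ] T3 A :=
  (TensorProduct.assoc ℂ A A A).toLinearMap ∘ₗ f.rTensor A ∘ₗ
    (TensorProduct.assoc ℂ A A A).symm.toLinearMap

/-- `id ⊗ f` : a map of `T2` acting on the factors 2,3 of `T3`. -/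
def op23 (f : T2 A →ₗ[ℂ] T2 A) : T3 A →ₗ[ℂ] T3 A := f.lTensor A

/-- `f ⊗ id ⊗ id` : a map of `T2` acting on the factors 1,2 of `T4`. -/
def op12_4 (f : T2 A →ₗ[ℂ] T2 A) : T4 A →ₗ[ℂ] T4 A :=
  (TensorProduct.assoc ℂ A A (T2 A)).toLinearMap ∘ₗ f.rTensor (T2 A) ∘ₗ
    (TensorProduct.assoc ℂ A A (T2 A)).symm.toLinearMap

/-- `id ⊗ f ⊗ id` : a map of `T2` acting on the factors 2,3 of `T4`. -/
def op23_4 (f : T2 A →ₗ[ℂ] T2 A) : T4 A →ₗ[ℂ] T4 A := (op12 f).lTensor A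

/-- `id ⊗ id ⊗ f` : a map of `T2` acting on the factors 3,4 of `T4`. -/
def op34_4 (f : T2 A →ₗ[ℂ] T2 A) : T4 A →ₗ[ℂ] T4 A := (f.lTensor A).lTensor A

/-- `m ⊗ id : T3 → T2`. -/
def m12 : T3 A →ₗ[ℂ] T2 A :=
  (mA (A := A)).rTensor A ∘ₗ (TensorProduct.assoc ℂ A A A).symm.toLinearMap

/-- `id ⊗ m : T3 → T2`. -/
def m23 : T3 A →ₗ[ℂ] T2 A := (mA (A := A)).lTensor A

/-- `m ⊗ m : T4 → T2`. -/
def mm : T4 A →ₗ[ℂ] T2 A := m12 ∘ₗ ((mA (A := A)).lTensor A).lTensor A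

/-- A braided quantum group structure on the algebra `A` (Đurđević).
`φ` is the coproduct, `ε` the counit, `κ` the antipode, `σ` the braiding
(with given inverse `σ'`). -/
structure BQG (A : Type*) [Ring A] [Algebra ℂ A] where
  φ : A →ₗ[ℂ] T2 A
  ε : A →ₗ[ℂ] ℂ
  κ : A →ₗ[ℂ] A
  σ : T2 A →ₗ[ℂ] T2 A
  σ' : T2 A →ₗ[ℂ] T2 A
  σ_comp : σ ∘ₗ σ' = LinearMap.id
  comp_σ : σ' ∘ₗ σ = LinearMap.id
  κ_bij : Function.Bijective κ
  /-- coassociativity `(φ⊗id)φ = (id⊗φ)φ` -/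
  coassoc : (TensorProduct.assoc ℂ A A A).toLinearMap ∘ₗ φ.rTensor A ∘ₗ φ = φ.lTensor A ∘ₗ φ
  /-- `(ε⊗id)φ = id` -/
  counit_left : (TensorProduct.lid ℂ A).toLinearMap ∘ₗ ε.rTensor A ∘ₗ φ = LinearMap.id
  /-- `(id⊗ε)φ = id` -/
  counit_right : (TensorProduct.rid ℂ A).toLinearMap ∘ₗ ε.lTensor A ∘ₗ φ = LinearMap.id
  /-- `σ(m⊗id) = (id⊗m)(σ⊗id)(id⊗σ)` -/
  braid_mul_left : σ ∘ₗ m12 = m23 ∘ₗ op12 σ ∘ₗ op23 σ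
  /-- `σ(id⊗m) = (m⊗id)(id⊗σ)(σ⊗id)` -/
  braid_mul_right : σ ∘ₗ m23 = m12 ∘ₗ op23 σ ∘ₗ op12 σ
  /-- `φm = (m⊗m)(id⊗σ⊗id)(φ⊗φ)` -/
  comul_mul : φ ∘ₗ mA = mm ∘ₗ op23_4 σ ∘ₗ
      (TensorProduct.assoc ℂ A A (T2 A)).toLinearMap ∘ₗ φ.rTensor (T2 A) ∘ₗ φ.lTensor A
  /-- `(σ⊗id²)(id⊗φ⊗id)(σ⁻¹⊗id)(id⊗φ) = (id²⊗σ)(id⊗φ⊗id)(id⊗σ⁻¹)(φ⊗id)` -/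
  mixed_coassoc :
    op12_4 σ ∘ₗ ((TensorProduct.assoc ℂ A A A).toLinearMap ∘ₗ φ.rTensor A).lTensor A ∘ₗ
        op12 σ' ∘ₗ φ.lTensor A
      = op34_4 σ ∘ₗ ((TensorProduct.assoc ℂ A A A).toLinearMap ∘ₗ φ.rTensor A).lTensor A ∘ₗ
        op23 σ' ∘ₗ (TensorProduct.assoc ℂ A A A).toLinearMap ∘ₗ φ.rTensor A
  /-- `m(κ⊗id)φ = 1ε` -/
  antipode_left : mA ∘ₗ κ.rTensor A ∘ₗ φ = Algebra.linearMap ℂ A ∘ₗ ε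
  /-- `m(id⊗κ)φ = 1ε` -/
  antipode_right : mA ∘ₗ κ.lTensor A ∘ₗ φ = Algebra.linearMap ℂ A ∘ₗ ε

namespace BQG

variable {A : Type*} [Ring A] [Algebra ℂ A] (G : BQG A)

/-- `φ ⊗ id : T2 → T3`. -/
def φ1 : T2 A →ₗ[ℂ] T3 A := (TensorProduct.assoc ℂ A A A).toLinearMap ∘ₗ G.φ.rTensor A

/-- `id ⊗ φ : T2 → T3`. -/
def φ2 : T2 A →ₗ[ℂ] T3 A := G.φ.lTensor A

/-- `id² ⊗ ε : T3 → T2`. -/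
def ε3r : T3 A →ₗ[ℂ] T2 A :=
  ((TensorProduct.rid ℂ A).toLinearMap ∘ₗ G.ε.lTensor A).lTensor A

/-- `ε ⊗ id² : T3 → T2`. -/
def ε3l : T3 A →ₗ[ℂ] T2 A :=
  (TensorProduct.lid ℂ (T2 A)).toLinearMap ∘ₗ G.ε.rTensor (T2 A)

/-- The secondary braiding `τ = (id²⊗ε)(id⊗σ⁻¹)(φ⊗id)σ`. -/
def τ : T2 A →ₗ[ℂ] T2 A := G.ε3r ∘ₗ op23 G.σ' ∘ₗ G.φ1 ∘ₗ G.σ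

/-- `ε ⊗ ε : T2 → ℂ`. -/
def εε : T2 A →ₗ[ℂ] ℂ :=
  (TensorProduct.lid ℂ ℂ).toLinearMap ∘ₗ G.ε.rTensor ℂ ∘ₗ G.ε.lTensor A

end BQG

/-!
Write `ρ(f) = (id² ⊗ ε)(id ⊗ f)(φ ⊗ id)`, so that `τ = ρ(σ⁻¹) σ`. Both `ρ(σ)` and
`(ε ⊗ id²)(σ ⊗ id)(id ⊗ φ)` are obtained from mixed coassociativity by applying `ε` to an outer leg,
hence they agree, and `ρ(σ)` is colinear on both sides. A bicolinear endomorphism of `A ⊗ A` is a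
twist `T_h : a ⊗ b ↦ a₁ ⊗ h(a₂ ⊗ b₁) b₂` by a functional `h`, and composing twists amounts to
convolving their functionals. For `g = ε m`, multiplicativity of `φ` and cancellation by the
antipode give `(id ⊗ g)(σ ⊗ id)(id ⊗ φ) = ε ⊗ id`. This yields `T_g ρ(σ) = id`, then `τ = σ T_g` by
mixed coassociativity, and finally `ρ(σ) T_g = id` because `(ε ⊗ id) τ = id ⊗ ε`.
-/

open Coalgebra

section TensorModules

variable {R M N P Q : Type*} [CommSemiring R] [AddCommMonoid M] [Module R M]
  [AddCommMonoid N] [Module R N] [AddCommMonoid P] [Module R P] [AddCommMonoid Q] [Module R Q]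

lemma tensor_ext_mk {f g : M ⊗[R] N →ₗ[R] P}
    (h : ∀ m, f ∘ₗ TensorProduct.mk R M N m = g ∘ₗ TensorProduct.mk R M N m) : f = g :=
  TensorProduct.ext' fun m n => LinearMap.congr_fun (h m) n

lemma tensor_ext_flip_mk {f g : M ⊗[R] N →ₗ[R] P}
    (h : ∀ n, f ∘ₗ (TensorProduct.mk R M N).flip n = g ∘ₗ (TensorProduct.mk R M N).flip n) :
    f = g :=
  TensorProduct.ext' fun m n => LinearMap.congr_fun (h n) m

lemma assoc_comp_rTensor_assoc_comp_assoc_symm :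
    (TensorProduct.assoc R M (N ⊗[R] P) Q).toLinearMap ∘ₗ
        (TensorProduct.assoc R M N P).toLinearMap.rTensor Q ∘ₗ
        (TensorProduct.assoc R (M ⊗[R] N) P Q).symm.toLinearMap
      = (TensorProduct.assoc R N P Q).symm.toLinearMap.lTensor M ∘ₗ
        (TensorProduct.assoc R M N (P ⊗[R] Q)).toLinearMap := by
  ext; simp

variable (M) in
/-- Contraction of the last two legs by a functional: `(m ⊗ n) ⊗ p ↦ g(n ⊗ p) m`. -/
def contractLast (g : N ⊗[R] P →ₗ[R] R) : (M ⊗[R] N) ⊗[R] P →ₗ[R] M :=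
  (TensorProduct.rid R M).toLinearMap ∘ₗ g.lTensor M ∘ₗ (TensorProduct.assoc R M N P).toLinearMap

lemma contractLast_comp_rTensor_rTensor (g : N ⊗[R] P →ₗ[R] R) (f : M →ₗ[R] Q) :
    contractLast Q g ∘ₗ (f.rTensor N).rTensor P = f ∘ₗ contractLast M g := by
  simp only [contractLast, coassoc_simps]

lemma contractLast_tensor (g : N ⊗[R] P →ₗ[R] R) :
    contractLast (Q ⊗[R] M) g ∘ₗ (TensorProduct.assoc R Q M N).symm.toLinearMap.rTensor P ∘ₗ
      (TensorProduct.assoc R Q (M ⊗[R] N) P).symm.toLinearMap = (contractLast M g).lTensor Q := by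
  ext; simp [contractLast]

end TensorModules

section Coextension

variable {R C M N P D : Type*} [CommSemiring R]
  [AddCommMonoid C] [Module R C] [Coalgebra R C] [AddCommMonoid D] [Module R D] [Coalgebra R D]
  [AddCommMonoid M] [Module R M] [AddCommMonoid N] [Module R N] [AddCommMonoid P] [Module R P]

variable (R C M) in
/-- The map `ε ⊗ id`, the counit of the cofree left `C`-comodule on `M`. -/
def counitLeft : C ⊗[R] M →ₗ[R] M :=
  (TensorProduct.lid R M).toLinearMap ∘ₗ counit.rTensor M

variable (R M D) in
/-- The map `id ⊗ ε`, the counit of the cofree right `D`-comodule on `M`. -/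
def counitRight : M ⊗[R] D →ₗ[R] M :=
  (TensorProduct.rid R M).toLinearMap ∘ₗ counit.lTensor M

/-- The left colinear map `(id ⊗ f)(φ ⊗ id)` of cofree comodules with
`(ε ⊗ id) ∘ coextendLeft f = f`. -/
def coextendLeft (f : C ⊗[R] M →ₗ[R] N) : C ⊗[R] M →ₗ[R] C ⊗[R] N :=
  f.lTensor C ∘ₗ (TensorProduct.assoc R C C M).toLinearMap ∘ₗ comul.rTensor M

/-- The right colinear map `(f ⊗ id)(id ⊗ φ)` of cofree comodules with
`(id ⊗ ε) ∘ coextendRight f = f`. -/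
def coextendRight (f : M ⊗[R] D →ₗ[R] N) : M ⊗[R] D →ₗ[R] N ⊗[R] D :=
  f.rTensor D ∘ₗ (TensorProduct.assoc R M D D).symm.toLinearMap ∘ₗ comul.lTensor M

lemma lTensor_comp_coextendLeft (g : N →ₗ[R] P) (f : C ⊗[R] M →ₗ[R] N) :
    g.lTensor C ∘ₗ coextendLeft f = coextendLeft (g ∘ₗ f) := by
  simp only [coextendLeft, lTensor_comp, comp_assoc]

lemma rTensor_comp_coextendRight (g : N →ₗ[R] P) (f : M ⊗[R] D →ₗ[R] N) :
    g.rTensor D ∘ₗ coextendRight f = coextendRight (g ∘ₗ f) := by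
  simp only [coextendRight, rTensor_comp, comp_assoc]

lemma coextendLeft_comp_lTensor (f : C ⊗[R] N →ₗ[R] P) (g : M →ₗ[R] N) :
    coextendLeft f ∘ₗ g.lTensor C = coextendLeft (f ∘ₗ g.lTensor C) := by
  simp only [coextendLeft, coassoc_simps]

lemma coextendRight_comp_rTensor (f : N ⊗[R] D →ₗ[R] P) (g : M →ₗ[R] N) :
    coextendRight f ∘ₗ g.rTensor D = coextendRight (f ∘ₗ g.rTensor D) := by
  simp only [coextendRight, coassoc_simps]

lemma counitLeft_comp_lTensor (f : M →ₗ[R] N) :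
    counitLeft R C N ∘ₗ f.lTensor C = f ∘ₗ counitLeft R C M := by
  simp only [counitLeft, coassoc_simps]

lemma counitRight_comp_rTensor (f : M →ₗ[R] N) :
    counitRight R N D ∘ₗ f.rTensor D = f ∘ₗ counitRight R M D := by
  simp only [counitRight, coassoc_simps]

lemma counitLeft_comp_comul : counitLeft R C C ∘ₗ comul = .id := by
  ext; simp [counitLeft]

lemma counitRight_comp_comul : counitRight R C C ∘ₗ comul = .id := by
  ext; simp [counitRight]

lemma coextendLeft_comp_comul (f : C ⊗[R] C →ₗ[R] N) :
    coextendLeft f ∘ₗ comul = (f ∘ₗ comul).lTensor C ∘ₗ comul := by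
  simp only [coextendLeft, lTensor_comp, comp_assoc, coassoc]

lemma coextendRight_comp_comul (f : C ⊗[R] C →ₗ[R] N) :
    coextendRight f ∘ₗ comul = (f ∘ₗ comul).rTensor C ∘ₗ comul := by
  simp only [coextendRight, rTensor_comp, comp_assoc, coassoc_symm]

lemma coextendLeft_comp_flip_mk (f : C ⊗[R] M →ₗ[R] N) (m : M) :
    coextendLeft f ∘ₗ (TensorProduct.mk R C M).flip m
      = (f ∘ₗ (TensorProduct.mk R C M).flip m).lTensor C ∘ₗ comul := by
  have hmk : (TensorProduct.assoc R C C M).toLinearMap ∘ₗ (TensorProduct.mk R (C ⊗[R] C) M).flip m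
      = ((TensorProduct.mk R C M).flip m).lTensor C := by
    ext; simp
  rw [lTensor_comp, ← hmk]
  rfl

lemma coextendRight_comp_mk (f : M ⊗[R] D →ₗ[R] N) (m : M) :
    coextendRight f ∘ₗ TensorProduct.mk R M D m
      = (f ∘ₗ TensorProduct.mk R M D m).rTensor D ∘ₗ comul := by
  have hmk : (TensorProduct.assoc R M D D).symm.toLinearMap ∘ₗ TensorProduct.mk R M (D ⊗[R] D) m
      = (TensorProduct.mk R M D m).rTensor D := by
    ext; simp
  rw [rTensor_comp, ← hmk]
  rfl

lemma counitLeft_comp_coextendLeft (f : C ⊗[R] M →ₗ[R] N) :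
    counitLeft R C N ∘ₗ coextendLeft f = f := by
  refine tensor_ext_flip_mk fun m => ?_
  rw [comp_assoc, coextendLeft_comp_flip_mk, ← comp_assoc, counitLeft_comp_lTensor, comp_assoc,
    counitLeft_comp_comul, comp_id]

lemma counitRight_comp_coextendRight (f : M ⊗[R] D →ₗ[R] N) :
    counitRight R N D ∘ₗ coextendRight f = f := by
  refine tensor_ext_mk fun m => ?_
  rw [comp_assoc, coextendRight_comp_mk, ← comp_assoc, counitRight_comp_rTensor, comp_assoc,
    counitRight_comp_comul, comp_id]

lemma coextendLeft_comp (g : C ⊗[R] N →ₗ[R] P) (f : C ⊗[R] M →ₗ[R] N) :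
    coextendLeft g ∘ₗ coextendLeft f = coextendLeft (g ∘ₗ coextendLeft f) := by
  refine tensor_ext_flip_mk fun m => ?_
  rw [coextendLeft_comp_flip_mk, comp_assoc, comp_assoc, coextendLeft_comp_flip_mk, ← comp_assoc,
    coextendLeft_comp_lTensor, coextendLeft_comp_comul, comp_assoc]

lemma coextendRight_comp (g : N ⊗[R] D →ₗ[R] P) (f : M ⊗[R] D →ₗ[R] N) :
    coextendRight g ∘ₗ coextendRight f = coextendRight (g ∘ₗ coextendRight f) := by
  refine tensor_ext_mk fun m => ?_
  rw [coextendRight_comp_mk, comp_assoc, comp_assoc, coextendRight_comp_mk, ← comp_assoc,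
    coextendRight_comp_rTensor, coextendRight_comp_comul, comp_assoc]

lemma coextendLeft_counitLeft : coextendLeft (counitLeft R C M) = .id := by
  refine tensor_ext_flip_mk fun m => ?_
  have hmk : counitLeft R C M ∘ₗ (TensorProduct.mk R C M).flip m
      = toSpanSingleton R M m ∘ₗ counit := by
    ext; simp [counitLeft]
  rw [coextendLeft_comp_flip_mk, hmk, lTensor_comp, comp_assoc, lTensor_counit_comp_comul]
  ext; simp

lemma coextendRight_counitRight : coextendRight (counitRight R M D) = .id := by
  refine tensor_ext_mk fun m => ?_
  have hmk : counitRight R M D ∘ₗ TensorProduct.mk R M D m = toSpanSingleton R M m ∘ₗ counit := by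
    ext; simp [counitRight]
  rw [coextendRight_comp_mk, hmk, rTensor_comp, comp_assoc, rTensor_counit_comp_comul]
  ext; simp

lemma assoc_comp_coextendRight_coextendLeft (f : C ⊗[R] D →ₗ[R] N) :
    (TensorProduct.assoc R C N D).toLinearMap ∘ₗ coextendRight (coextendLeft f)
      = coextendLeft (coextendRight f) := calc
  _ = (f.rTensor D).lTensor C ∘ₗ ((TensorProduct.assoc R C (C ⊗[R] D) D).toLinearMap ∘ₗ
        (TensorProduct.assoc R C C D).toLinearMap.rTensor D ∘ₗ
        (TensorProduct.assoc R (C ⊗[R] C) D D).symm.toLinearMap) ∘ₗ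
        TensorProduct.map comul comul := by
    simp only [coextendLeft, coextendRight, coassoc_simps]
  _ = (f.rTensor D).lTensor C ∘ₗ ((TensorProduct.assoc R C D D).symm.toLinearMap.lTensor C ∘ₗ
        (TensorProduct.assoc R C C (D ⊗[R] D)).toLinearMap) ∘ₗ TensorProduct.map comul comul := by
    rw [assoc_comp_rTensor_assoc_comp_assoc_symm]
  _ = _ := by
    simp only [coextendLeft, coextendRight, coassoc_simps]

/-- The twist `c ⊗ d ↦ c₁ ⊗ h(c₂ ⊗ d₁) d₂` by a functional `h`; these are the bicolinear
endomorphisms of `C ⊗ D`. -/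
def twist (h : C ⊗[R] D →ₗ[R] R) : C ⊗[R] D →ₗ[R] C ⊗[R] D :=
  coextendLeft ((TensorProduct.lid R D).toLinearMap ∘ₗ coextendRight h)

lemma twist_eq_coextendRight (h : C ⊗[R] D →ₗ[R] R) :
    twist h = coextendRight ((TensorProduct.rid R C).toLinearMap ∘ₗ coextendLeft h) := by
  have triangle :
      (TensorProduct.lid R D).toLinearMap.lTensor C ∘ₗ (TensorProduct.assoc R C R D).toLinearMap
        = (TensorProduct.rid R C).toLinearMap.rTensor D := by
    ext; simp
  rw [twist, ← lTensor_comp_coextendLeft, ← assoc_comp_coextendRight_coextendLeft, ← comp_assoc,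
    triangle, rTensor_comp_coextendRight]

lemma counitRight_comp_twist (h : C ⊗[R] D →ₗ[R] R) :
    counitRight R C D ∘ₗ twist h = (TensorProduct.rid R C).toLinearMap ∘ₗ coextendLeft h := by
  rw [twist_eq_coextendRight, counitRight_comp_coextendRight]

lemma twist_comp_twist (g h : C ⊗[R] D →ₗ[R] R) : twist g ∘ₗ twist h = twist (g ∘ₗ twist h) := by
  conv_lhs => rw [twist, twist, coextendLeft_comp, ← twist]
  rw [comp_assoc, twist_eq_coextendRight h, coextendRight_comp, ← twist_eq_coextendRight, ← twist]

lemma counit_comp_counitLeft :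
    counit ∘ₗ counitLeft R C D = counit ∘ₗ counitRight R C D := by
  ext; simp [counitLeft, counitRight, mul_comm]

lemma twist_counit_comp (j : C ⊗[R] D →ₗ[R] C) :
    twist (counit ∘ₗ j) = coextendLeft (counitLeft R C D ∘ₗ coextendRight j) := by
  rw [twist, ← rTensor_comp_coextendRight, ← comp_assoc, ← counitLeft]

lemma twist_counit_comp_counitRight : twist (counit ∘ₗ counitRight R C D) = .id := by
  rw [twist_counit_comp, coextendRight_counitRight, comp_id, coextendLeft_counitLeft]

lemma coextendLeft_eq_twist {u : C ⊗[R] D →ₗ[R] D} {j : C ⊗[R] D →ₗ[R] C}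
    (h : coextendLeft u = coextendRight j) : coextendLeft u = twist (counit ∘ₗ j) := by
  rw [twist_counit_comp, ← h, counitLeft_comp_coextendLeft]

lemma contractLast_comp_coextendRight_id (g : C ⊗[R] D →ₗ[R] R) :
    contractLast (M ⊗[R] C) g ∘ₗ (coextendRight (LinearMap.id : M ⊗[R] C →ₗ[R] M ⊗[R] C)).rTensor D
      = (counitRight R C D ∘ₗ twist g).lTensor M ∘ₗ
          (TensorProduct.assoc R M C D).toLinearMap := by
  have hassoc :
      contractLast (M ⊗[R] C) g ∘ₗ (TensorProduct.assoc R M C C).symm.toLinearMap.rTensor D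
        = (contractLast C g).lTensor M ∘ₗ (TensorProduct.assoc R M (C ⊗[R] C) D).toLinearMap := by
    ext; simp [contractLast]
  rw [coextendRight, rTensor_id, id_comp, rTensor_comp, ← comp_assoc, hassoc,
    counitRight_comp_twist]
  simp only [contractLast, coextendLeft, coassoc_simps]

end Coextension

section Braiding

variable {R C : Type*} [CommSemiring R] [AddCommMonoid C] [Module R C] [Coalgebra R C]

/-- The endomorphism `(id² ⊗ ε)(id ⊗ f)(φ ⊗ id)` of `C ⊗ C`; it gives `τ⁻¹σ` for `f = σ` and
`τσ⁻¹` for `f = σ⁻¹`. -/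
def counitalBraiding (f : C ⊗[R] C →ₗ[R] C ⊗[R] C) : C ⊗[R] C →ₗ[R] C ⊗[R] C :=
  coextendLeft (counitRight R C C ∘ₗ f)

/-- The secondary braiding `(id² ⊗ ε)(id ⊗ σ⁻¹)(φ ⊗ id) σ` of a braiding `σ`. -/
def secondaryBraiding (σ : C ⊗[R] C ≃ₗ[R] C ⊗[R] C) : C ⊗[R] C →ₗ[R] C ⊗[R] C :=
  counitalBraiding σ.symm.toLinearMap ∘ₗ σ.toLinearMap

/-- Mixed coassociativity
`(σ ⊗ id²)(id ⊗ φ ⊗ id)(σ⁻¹ ⊗ id)(id ⊗ φ) = (id² ⊗ σ)(id ⊗ φ ⊗ id)(id ⊗ σ⁻¹)(φ ⊗ id)`. The left side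
naturally lands in the left-nested fourfold tensor product and is reassociated. -/
def IsMixedCoassoc (σ : C ⊗[R] C ≃ₗ[R] C ⊗[R] C) : Prop :=
  (TensorProduct.assoc R C C (C ⊗[R] C)).toLinearMap ∘ₗ
      (TensorProduct.assoc R (C ⊗[R] C) C C).toLinearMap ∘ₗ
      coextendRight (coextendRight σ.toLinearMap ∘ₗ σ.symm.toLinearMap)
    = coextendLeft (coextendLeft σ.toLinearMap ∘ₗ σ.symm.toLinearMap)

lemma counitLeft_comp_secondaryBraiding (σ : C ⊗[R] C ≃ₗ[R] C ⊗[R] C) :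
    counitLeft R C C ∘ₗ secondaryBraiding σ = counitRight R C C := by
  rw [secondaryBraiding, counitalBraiding, ← comp_assoc, counitLeft_comp_coextendLeft, comp_assoc,
    σ.symm_comp, comp_id]

namespace IsMixedCoassoc

variable {σ : C ⊗[R] C ≃ₗ[R] C ⊗[R] C}

lemma assoc_comp_coextendRight (hσ : IsMixedCoassoc σ) :
    (TensorProduct.assoc R C C C).toLinearMap ∘ₗ coextendRight σ.toLinearMap
      = coextendLeft (counitalBraiding σ.toLinearMap ∘ₗ σ.symm.toLinearMap) ∘ₗ
          σ.toLinearMap := by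
  have hassoc : ((counitRight R C C).lTensor C).lTensor C ∘ₗ
      (TensorProduct.assoc R C C (C ⊗[R] C)).toLinearMap ∘ₗ
      (TensorProduct.assoc R (C ⊗[R] C) C C).toLinearMap
      = (TensorProduct.assoc R C C C).toLinearMap ∘ₗ counitRight R ((C ⊗[R] C) ⊗[R] C) C := by
    ext; simp [counitRight]
  rw [← LinearEquiv.comp_toLinearMap_symm_eq]
  calc (TensorProduct.assoc R C C C).toLinearMap ∘ₗ coextendRight σ.toLinearMap ∘ₗ
        σ.symm.toLinearMap
    _ = ((counitRight R C C).lTensor C).lTensor C ∘ₗ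
          coextendLeft (coextendLeft σ.toLinearMap ∘ₗ σ.symm.toLinearMap) := by
      rw [← hσ, ← comp_assoc (coextendRight _), ← comp_assoc (coextendRight _), hassoc,
        comp_assoc, counitRight_comp_coextendRight]
    _ = coextendLeft (counitalBraiding σ.toLinearMap ∘ₗ σ.symm.toLinearMap) := by
      rw [lTensor_comp_coextendLeft, ← comp_assoc, lTensor_comp_coextendLeft, counitalBraiding]

lemma assoc_symm_comp_coextendLeft (hσ : IsMixedCoassoc σ) :
    (TensorProduct.assoc R C C C).symm.toLinearMap ∘ₗ coextendLeft σ.toLinearMap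
      = coextendRight (coextendRight (counitLeft R C C ∘ₗ σ.toLinearMap) ∘ₗ σ.symm.toLinearMap) ∘ₗ
          σ.toLinearMap := by
  have hassoc : counitLeft R C (C ⊗[R] (C ⊗[R] C)) ∘ₗ
      (TensorProduct.assoc R C C (C ⊗[R] C)).toLinearMap ∘ₗ
      (TensorProduct.assoc R (C ⊗[R] C) C C).toLinearMap
      = (TensorProduct.assoc R C C C).toLinearMap ∘ₗ ((counitLeft R C C).rTensor C).rTensor C := by
    ext; simp [counitLeft, smul_tmul']
  rw [← LinearEquiv.comp_toLinearMap_symm_eq, comp_assoc, LinearEquiv.toLinearMap_symm_comp_eq]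
  calc coextendLeft σ.toLinearMap ∘ₗ σ.symm.toLinearMap
    _ = counitLeft R C _ ∘ₗ coextendLeft (coextendLeft σ.toLinearMap ∘ₗ σ.symm.toLinearMap) := by
      rw [counitLeft_comp_coextendLeft]
    _ = (TensorProduct.assoc R C C C).toLinearMap ∘ₗ ((counitLeft R C C).rTensor C).rTensor C ∘ₗ
          coextendRight (coextendRight σ.toLinearMap ∘ₗ σ.symm.toLinearMap) := by
      rw [← hσ, ← comp_assoc (coextendRight _), ← comp_assoc, hassoc, comp_assoc]
    _ = (TensorProduct.assoc R C C C).toLinearMap ∘ₗ coextendRight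
          (coextendRight (counitLeft R C C ∘ₗ σ.toLinearMap) ∘ₗ σ.symm.toLinearMap) := by
      rw [rTensor_comp_coextendRight, ← comp_assoc, rTensor_comp_coextendRight]

lemma counitalBraiding_eq_coextendRight (hσ : IsMixedCoassoc σ) :
    counitalBraiding σ.toLinearMap = coextendRight (counitLeft R C C ∘ₗ σ.toLinearMap) := by
  have hassoc : counitLeft R C (C ⊗[R] C) ∘ₗ (TensorProduct.assoc R C C C).toLinearMap
      = (counitLeft R C C).rTensor C := by
    ext; simp [counitLeft, smul_tmul']
  rw [← rTensor_comp_coextendRight, ← hassoc, comp_assoc, hσ.assoc_comp_coextendRight,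
    ← comp_assoc, counitLeft_comp_coextendLeft, comp_assoc, σ.symm_comp, comp_id]

lemma counitalBraiding_eq_twist (hσ : IsMixedCoassoc σ) :
    counitalBraiding σ.toLinearMap = twist (counit ∘ₗ counitLeft R C C ∘ₗ σ.toLinearMap) :=
  coextendLeft_eq_twist hσ.counitalBraiding_eq_coextendRight

variable {g : C ⊗[R] C →ₗ[R] R}

lemma twist_comp_counitalBraiding (hσ : IsMixedCoassoc σ)
    (hg : contractLast C g ∘ₗ coextendRight σ.toLinearMap = counitLeft R C C) :
    twist g ∘ₗ counitalBraiding σ.toLinearMap = .id := by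
  have hcontract : g ∘ₗ (counitLeft R C C).rTensor C = counit ∘ₗ contractLast C g := by
    ext; simp [counitLeft, contractLast, ← smul_tmul', mul_comm]
  have hcounit : g ∘ₗ counitalBraiding σ.toLinearMap = counit ∘ₗ counitRight R C C := by
    rw [hσ.counitalBraiding_eq_coextendRight, ← rTensor_comp_coextendRight, ← comp_assoc,
      hcontract, comp_assoc, hg, counit_comp_counitLeft]
  rw [hσ.counitalBraiding_eq_twist, twist_comp_twist, ← hσ.counitalBraiding_eq_twist, hcounit,
    twist_counit_comp_counitRight]

lemma secondaryBraiding_eq_contract (hσ : IsMixedCoassoc σ)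
    (hg : contractLast C g ∘ₗ coextendRight σ.toLinearMap = counitLeft R C C) :
    secondaryBraiding σ = contractLast (C ⊗[R] C) g ∘ₗ
      coextendRight (coextendRight .id ∘ₗ σ.toLinearMap) := by
  rw [← rTensor_comp_coextendRight, ← comp_assoc, contractLast_comp_coextendRight_id, comp_assoc,
    hσ.assoc_comp_coextendRight, ← comp_assoc, lTensor_comp_coextendLeft, comp_assoc,
    ← comp_assoc _ _ (twist g), hσ.twist_comp_counitalBraiding hg, id_comp, secondaryBraiding,
    counitalBraiding]

lemma coextendRight_id_comp (hσ : IsMixedCoassoc σ)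
    (hg : contractLast C g ∘ₗ coextendRight σ.toLinearMap = counitLeft R C C) :
    coextendRight .id ∘ₗ σ.toLinearMap = (σ.toLinearMap ∘ₗ twist g).rTensor C ∘ₗ
      (TensorProduct.assoc R C C C).symm.toLinearMap ∘ₗ coextendLeft σ.toLinearMap := by
  rw [hσ.assoc_symm_comp_coextendLeft, ← hσ.counitalBraiding_eq_coextendRight, ← comp_assoc,
    rTensor_comp_coextendRight, comp_assoc, ← comp_assoc _ _ (twist g),
    hσ.twist_comp_counitalBraiding hg, id_comp, σ.comp_symm]

theorem secondaryBraiding_eq (hσ : IsMixedCoassoc σ)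
    (hg : contractLast C g ∘ₗ coextendRight σ.toLinearMap = counitLeft R C C) :
    secondaryBraiding σ = σ.toLinearMap ∘ₗ twist g := by
  rw [hσ.secondaryBraiding_eq_contract hg, hσ.coextendRight_id_comp hg]
  calc contractLast (C ⊗[R] C) g ∘ₗ coextendRight ((σ.toLinearMap ∘ₗ twist g).rTensor C ∘ₗ
        (TensorProduct.assoc R C C C).symm.toLinearMap ∘ₗ coextendLeft σ.toLinearMap)
    _ = (σ.toLinearMap ∘ₗ twist g) ∘ₗ contractLast (C ⊗[R] C) g ∘ₗ
          (TensorProduct.assoc R C C C).symm.toLinearMap.rTensor C ∘ₗ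
          coextendRight (coextendLeft σ.toLinearMap) := by
      rw [← rTensor_comp_coextendRight, ← rTensor_comp_coextendRight, ← comp_assoc,
        contractLast_comp_rTensor_rTensor, comp_assoc]
    _ = (σ.toLinearMap ∘ₗ twist g) ∘ₗ (contractLast C g).lTensor C ∘ₗ
          coextendLeft (coextendRight σ.toLinearMap) := by
      rw [← contractLast_tensor, ← assoc_comp_coextendRight_coextendLeft]
      simp only [comp_assoc, LinearEquiv.symm_comp_assoc]
    _ = σ.toLinearMap ∘ₗ twist g := by
      rw [lTensor_comp_coextendLeft, hg, coextendLeft_counitLeft, comp_id]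

lemma counitalBraiding_comp_twist (hσ : IsMixedCoassoc σ)
    (hg : contractLast C g ∘ₗ coextendRight σ.toLinearMap = counitLeft R C C) :
    counitalBraiding σ.toLinearMap ∘ₗ twist g = .id := by
  rw [hσ.counitalBraiding_eq_twist, twist_comp_twist, comp_assoc, comp_assoc,
    ← hσ.secondaryBraiding_eq hg, counitLeft_comp_secondaryBraiding, twist_counit_comp_counitRight]

end IsMixedCoassoc

end Braiding

section Antipode

variable {R H M : Type*} [CommSemiring R] [Semiring H] [Algebra R H] [Coalgebra R H]
  [AddCommMonoid M] [Module R M]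

theorem mul'_comp_coextendLeft_injective {κ : H →ₗ[R] H}
    (hκ : mul' R H ∘ₗ κ.rTensor H ∘ₗ comul = Algebra.linearMap R H ∘ₗ counit) :
    Function.Injective fun u : H ⊗[R] M →ₗ[R] H => mul' R H ∘ₗ coextendLeft u := by
  have hassoc : mul' R H ∘ₗ κ.rTensor H ∘ₗ (mul' R H).lTensor H ∘ₗ
      (TensorProduct.assoc R H H H).toLinearMap
      = mul' R H ∘ₗ (mul' R H ∘ₗ κ.rTensor H).rTensor H := by
    ext; simp [mul_assoc]
  have hinv : mul' R H ∘ₗ κ.rTensor H ∘ₗ coextendLeft (mul' R H) = counitLeft R H H := calc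
    _ = (mul' R H ∘ₗ κ.rTensor H ∘ₗ (mul' R H).lTensor H ∘ₗ
      (TensorProduct.assoc R H H H).toLinearMap) ∘ₗ comul.rTensor H := rfl
    _ = mul' R H ∘ₗ (Algebra.linearMap R H ∘ₗ counit).rTensor H := by
      rw [hassoc, comp_assoc, ← rTensor_comp, comp_assoc, hκ]
    _ = counitLeft R H H := by
      ext; simp [counitLeft, Algebra.smul_def]
  refine Function.LeftInverse.injective
    (g := fun v => mul' R H ∘ₗ κ.rTensor H ∘ₗ coextendLeft v) fun u => ?_
  dsimp only
  rw [← coextendLeft_comp, ← comp_assoc, ← comp_assoc, comp_assoc _ _ (mul' R H), hinv,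
    counitLeft_comp_coextendLeft]

/-- Multiplicativity `φ m = (m ⊗ m)(id ⊗ σ ⊗ id)(φ ⊗ φ)` of the coproduct with respect to the
braided algebra structure on `H ⊗ H`. -/
def IsBraidedMul (σ : H ⊗[R] H →ₗ[R] H ⊗[R] H) : Prop :=
  comul ∘ₗ mul' R H = TensorProduct.map (mul' R H) (mul' R H) ∘ₗ
    (TensorProduct.assoc R H H (H ⊗[R] H)).symm.toLinearMap ∘ₗ
    coextendLeft ((TensorProduct.assoc R H H H).toLinearMap ∘ₗ coextendRight σ)

lemma IsBraidedMul.contractLast_comp_coextendRight {σ : H ⊗[R] H →ₗ[R] H ⊗[R] H}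
    (hσ : IsBraidedMul σ) {κ : H →ₗ[R] H}
    (hκ : mul' R H ∘ₗ κ.rTensor H ∘ₗ comul = Algebra.linearMap R H ∘ₗ counit) :
    contractLast H (counit ∘ₗ mul' R H) ∘ₗ coextendRight σ = counitLeft R H H := by
  have hassoc : counitRight R H H ∘ₗ TensorProduct.map (mul' R H) (mul' R H) ∘ₗ
      (TensorProduct.assoc R H H (H ⊗[R] H)).symm.toLinearMap
      = mul' R H ∘ₗ
        ((TensorProduct.rid R H).toLinearMap ∘ₗ (counit ∘ₗ mul' R H).lTensor H).lTensor H := by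
    ext; simp [counitRight]
  refine mul'_comp_coextendLeft_injective hκ ?_
  symm
  calc mul' R H ∘ₗ coextendLeft (counitLeft R H H)
    _ = counitRight R H H ∘ₗ comul ∘ₗ mul' R H := by
      rw [coextendLeft_counitLeft, comp_id, ← comp_assoc, counitRight_comp_comul, id_comp]
    _ = (mul' R H ∘ₗ ((TensorProduct.rid R H).toLinearMap ∘ₗ
          (counit ∘ₗ mul' R H).lTensor H).lTensor H) ∘ₗ
          coextendLeft ((TensorProduct.assoc R H H H).toLinearMap ∘ₗ coextendRight σ) := by
      rw [hσ, ← hassoc]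
      simp only [comp_assoc]
    _ = mul' R H ∘ₗ coextendLeft (contractLast H (counit ∘ₗ mul' R H) ∘ₗ coextendRight σ) := by
      rw [comp_assoc, lTensor_comp_coextendLeft, contractLast]
      simp only [comp_assoc]

theorem bqg_tau_bijective_general (σ : H ⊗[R] H ≃ₗ[R] H ⊗[R] H) (κ : H →ₗ[R] H)
    (hσ : IsMixedCoassoc σ) (hmul : IsBraidedMul σ.toLinearMap)
    (hκ : mul' R H ∘ₗ κ.rTensor H ∘ₗ comul = Algebra.linearMap R H ∘ₗ counit) :
    Function.Bijective (secondaryBraiding σ) ∧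
    secondaryBraiding σ ∘ₗ counitalBraiding σ.toLinearMap = σ.toLinearMap ∧
    secondaryBraiding σ ∘ₗ coextendRight (counitLeft R H H ∘ₗ σ.toLinearMap) = σ.toLinearMap := by
  have hpair := hmul.contractLast_comp_coextendRight hκ
  have hτ := hσ.secondaryBraiding_eq hpair
  have hleft := hσ.counitalBraiding_comp_twist hpair
  have hright := hσ.twist_comp_counitalBraiding hpair
  have hτρ : secondaryBraiding σ ∘ₗ counitalBraiding σ.toLinearMap = σ.toLinearMap := by
    rw [hτ, comp_assoc, hright, comp_id]
  refine ⟨?_, hτρ, hσ.counitalBraiding_eq_coextendRight ▸ hτρ⟩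
  rw [hτ]
  exact σ.bijective.comp (Function.bijective_iff_has_inverse.2
    ⟨counitalBraiding σ.toLinearMap, LinearMap.congr_fun hleft, LinearMap.congr_fun hright⟩)

end Antipode

namespace BQG

variable (G : BQG A)

/-- The coalgebra underlying a braided quantum group. -/
abbrev toCoalgebra : Coalgebra ℂ A where
  comul := G.φ
  counit := G.ε
  coassoc := G.coassoc
  rTensor_counit_comp_comul := LinearMap.ext fun a =>
    (TensorProduct.lid ℂ A).injective (by simpa using LinearMap.congr_fun G.counit_left a)
  lTensor_counit_comp_comul := LinearMap.ext fun a =>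
    (TensorProduct.rid ℂ A).injective (by simpa using LinearMap.congr_fun G.counit_right a)

/-- The braiding of a braided quantum group as a linear equivalence. -/
def braiding : T2 A ≃ₗ[ℂ] T2 A := .ofLinearMap G.σ G.σ' G.σ_comp G.comp_σ

lemma op12_4_comp_comul_comp_assoc (f : T2 A →ₗ[ℂ] T2 A) : letI := G.toCoalgebra;
    op12_4 f ∘ₗ ((TensorProduct.assoc ℂ A A A).toLinearMap ∘ₗ G.φ.rTensor A).lTensor A ∘ₗ
        (TensorProduct.assoc ℂ A A A).toLinearMap
      = (TensorProduct.assoc ℂ A A (A ⊗[ℂ] A)).toLinearMap ∘ₗ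
        (TensorProduct.assoc ℂ (A ⊗[ℂ] A) A A).toLinearMap ∘ₗ (coextendRight f).rTensor A := by
  let := G.toCoalgebra
  have hφ : G.φ = comul := rfl
  have pentagon : (TensorProduct.assoc ℂ (A ⊗[ℂ] A) A A).toLinearMap ∘ₗ
      (TensorProduct.assoc ℂ A A A).symm.toLinearMap.rTensor A
      = (TensorProduct.assoc ℂ A A (A ⊗[ℂ] A)).symm.toLinearMap ∘ₗ
        (TensorProduct.assoc ℂ A A A).toLinearMap.lTensor A ∘ₗ
        (TensorProduct.assoc ℂ A (A ⊗[ℂ] A) A).toLinearMap := by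
    ext; simp
  calc
    _ = (TensorProduct.assoc ℂ A A (A ⊗[ℂ] A)).toLinearMap ∘ₗ f.rTensor (A ⊗[ℂ] A) ∘ₗ
          ((TensorProduct.assoc ℂ A A (A ⊗[ℂ] A)).symm.toLinearMap ∘ₗ
          (TensorProduct.assoc ℂ A A A).toLinearMap.lTensor A ∘ₗ
          (TensorProduct.assoc ℂ A (A ⊗[ℂ] A) A).toLinearMap) ∘ₗ (G.φ.lTensor A).rTensor A := by
      simp only [op12_4, coassoc_simps]
    _ = _ := by
      rw [← pentagon]
      simp only [coextendRight, hφ, coassoc_simps]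

lemma isMixedCoassoc_braiding : letI := G.toCoalgebra; IsMixedCoassoc G.braiding := by
  let := G.toCoalgebra
  have hφ : G.φ = comul := rfl
  have hleft : op12_4 G.σ ∘ₗ
        ((TensorProduct.assoc ℂ A A A).toLinearMap ∘ₗ G.φ.rTensor A).lTensor A ∘ₗ
        op12 G.σ' ∘ₗ G.φ.lTensor A
      = (TensorProduct.assoc ℂ A A (A ⊗[ℂ] A)).toLinearMap ∘ₗ
        (TensorProduct.assoc ℂ (A ⊗[ℂ] A) A A).toLinearMap ∘ₗ
        coextendRight (coextendRight G.σ ∘ₗ G.σ') := by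
    rw [← rTensor_comp_coextendRight]
    exact congr($(G.op12_4_comp_comul_comp_assoc G.σ) ∘ₗ coextendRight G.σ')
  have hright : op34_4 G.σ ∘ₗ
        ((TensorProduct.assoc ℂ A A A).toLinearMap ∘ₗ G.φ.rTensor A).lTensor A ∘ₗ
        op23 G.σ' ∘ₗ (TensorProduct.assoc ℂ A A A).toLinearMap ∘ₗ G.φ.rTensor A
      = coextendLeft (coextendLeft G.σ ∘ₗ G.σ') := by
    simp only [op34_4, op23, hφ, coextendLeft, lTensor_comp, comp_assoc]
  exact hleft.symm.trans (G.mixed_coassoc.trans hright)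

lemma isBraidedMul_braiding : letI := G.toCoalgebra; IsBraidedMul G.braiding.toLinearMap := by
  let := G.toCoalgebra
  have hφ : G.φ = comul := rfl
  have hmm : (mm : T4 A →ₗ[ℂ] T2 A) = TensorProduct.map (mul' ℂ A) (mul' ℂ A) ∘ₗ
      (TensorProduct.assoc ℂ A A (A ⊗[ℂ] A)).symm.toLinearMap := by
    simp only [mm, m12, mA, coassoc_simps]
  have hσφφ : op23_4 G.σ ∘ₗ
      (TensorProduct.assoc ℂ A A (T2 A)).toLinearMap ∘ₗ G.φ.rTensor (T2 A) ∘ₗ G.φ.lTensor A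
      = coextendLeft ((TensorProduct.assoc ℂ A A A).toLinearMap ∘ₗ coextendRight G.σ) := by
    rw [rTensor_comp_lTensor, ← lTensor_comp_rTensor, lTensor_tensor, hφ]
    simp only [op23_4, op12, coextendLeft, coextendRight, lTensor_comp, comp_assoc,
      LinearEquiv.comp_symm_assoc]
  exact G.comul_mul.trans <| by rw [hmm, hσφφ]; rfl

lemma counitalBraiding_eq (f : T2 A →ₗ[ℂ] T2 A) :
    letI := G.toCoalgebra; counitalBraiding f = G.ε3r ∘ₗ op23 f ∘ₗ G.φ1 := by
  let := G.toCoalgebra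
  rw [counitalBraiding, ← lTensor_comp_coextendLeft]; rfl

lemma coextendRight_counitLeft_eq (f : T2 A →ₗ[ℂ] T2 A) :
    letI := G.toCoalgebra; coextendRight (counitLeft ℂ A A ∘ₗ f) = G.ε3l ∘ₗ op12 f ∘ₗ G.φ2 := by
  let := G.toCoalgebra
  have hε : G.ε = counit := rfl
  have hcounit : (counitLeft ℂ A A).rTensor A
      = G.ε3l ∘ₗ (TensorProduct.assoc ℂ A A A).toLinearMap := by
    ext; simp [counitLeft, BQG.ε3l, hε, smul_tmul']
  rw [← rTensor_comp_coextendRight, hcounit]; rfl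

lemma τ_eq : letI := G.toCoalgebra; secondaryBraiding G.braiding = G.τ :=
  congr($(G.counitalBraiding_eq G.σ') ∘ₗ G.σ)

end BQG

/-- The secondary braiding `τ` is bijective, with inverse characterized by
`τ⁻¹σ = (id²⊗ε)(id⊗σ)(φ⊗id) = (ε⊗id²)(σ⊗id)(id⊗φ)`, i.e.
`σ = τ ∘ (id²⊗ε)(id⊗σ)(φ⊗id)` and `σ = τ ∘ (ε⊗id²)(σ⊗id)(id⊗φ)`. -/
theorem bqg_tau_bijective {A : Type*} [Ring A] [Algebra ℂ A] (G : BQG A) :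
    Function.Bijective G.τ ∧
    G.τ ∘ₗ (G.ε3r ∘ₗ op23 G.σ ∘ₗ G.φ1) = G.σ ∧
    G.τ ∘ₗ (G.ε3l ∘ₗ op12 G.σ ∘ₗ G.φ2) = G.σ := by
  let := G.toCoalgebra
  rw [← G.τ_eq, ← G.counitalBraiding_eq, ← G.coextendRight_counitLeft_eq]
  exact bqg_tau_bijective_general G.braiding G.κ G.isMixedCoassoc_braiding
    G.isBraidedMul_braiding G.antipode_left
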